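/- arXiv:1010.5646 — 5 statements merged into one kernel-verified Lean document; each statement's English description precedes it below -/
import Mathlib

section
/- Let X, Y be sets, L, M complete lattices each equipped with a binary operation ⊗ that is monotone in each argument, f : X → Y a map, and φ : M → L a map having a right Galois adjoint φ* : L → M (φ m ≤ l ⇔ m ≤ φ* l). Assume φ(⊤) = ⊤, φ(a ⊗ b) = φ a ⊗ φ b for all a, b ∈ M, and φ m = ⊥ implies m = ⊥. If F is a fuzzy filter on (X, L), then F_{(f,φ)} := φ* ∘ F ∘ (f, φ)^← is a fuzzy filter on (Y, M). -/
/-!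
Everything follows from the Galois connection `φ ⊣ φs`. The operator `(f, φ)^←` is monotone and
preserves the constant maps `⊤`, `⊥` and the pointwise tensor, because `φ` preserves the
corresponding data (`φ ⊥ = ⊥` since `φ` is a lower adjoint). The upper adjoint `φs` is monotone
with `φs ⊤ = ⊤`, and `φs ⊥ = ⊥` because `φ` reflects `⊥`. It is lax for the tensor: the
transpose of the required inequality follows from `φ (φs l) ≤ l`, the monotonicity of the tensor
on `L` and the filter inequality for `F`.
-/

/-- `⊗ : L → L → L` is monotone in each argument. -/
def TensMono {L : Type*} [Preorder L] (t : L → L → L) : Prop :=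
  ∀ a b c d : L, a ≤ b → c ≤ d → t a c ≤ t b d

/-- A fuzzy filter on `(X, L)` with respect to the operation `t = ⊗`. -/
def IsFuzzyFilter {X L : Type*} [CompleteLattice L] (t : L → L → L)
    (F : (X → L) → L) : Prop :=
  F (fun _ => (⊤ : L)) = ⊤ ∧
  F (fun _ => (⊥ : L)) = ⊥ ∧
  (∀ f g : X → L, f ≤ g → F f ≤ F g) ∧
  (∀ f g : X → L, t (F f) (F g) ≤ F (fun x => t (f x) (g x)))

/-- The backward powerset operator `(f, φ)^← (b) = φ ∘ b ∘ f`. -/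
def backPow {X Y L M : Type*} (f : X → Y) (φ : M → L) (b : Y → M) : X → L :=
  φ ∘ b ∘ f

theorem stmt_3 {X Y L M : Type*} [CompleteLattice L] [CompleteLattice M]
    (tL : L → L → L) (tM : M → M → M) (htL : TensMono tL) (htM : TensMono tM)
    (f : X → Y) (φ : M → L) (φs : L → M)
    (adj : ∀ (m : M) (l : L), φ m ≤ l ↔ m ≤ φs l)
    (hTop : φ ⊤ = ⊤)
    (hTens : ∀ a b : M, φ (tM a b) = tL (φ a) (φ b))
    (hBot : ∀ m : M, φ m = ⊥ → m = ⊥)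
    (F : (X → L) → L) (hF : IsFuzzyFilter tL F) :
    IsFuzzyFilter tM (fun b : Y → M => φs (F (backPow f φ b))) := by
  have gc : GaloisConnection φ φs := adj
  obtain ⟨hF1, hF0, hFm, hFt⟩ := hF
  refine ⟨?_, ?_, ?_, ?_⟩
  · have h : backPow f φ (fun _ => (⊤ : M)) = fun _ => (⊤ : L) := funext fun _ => hTop
    simp only [h, hF1, gc.u_top]
  · have h : backPow f φ (fun _ => (⊥ : M)) = fun _ => (⊥ : L) := funext fun _ => gc.l_bot
    simp only [h, hF0]
    -- `φ (φs ⊥) ≤ ⊥` by the counit, and only `⊥` is sent to `⊥` by `φ`.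
    exact hBot _ (le_bot_iff.mp (gc.l_u_le ⊥))
  · intro a b hab
    exact gc.monotone_u (hFm _ _ fun x => gc.monotone_l (hab (f x)))
  · intro a b
    have h : backPow f φ (fun y => tM (a y) (b y)) =
        fun x => tL (backPow f φ a x) (backPow f φ b x) := funext fun _ => hTens _ _
    simp only [h]
    -- Transpose along the adjunction, then use the counit in each argument of `tL`.
    rw [← adj, hTens]
    exact (htL _ _ _ _ (gc.l_u_le _) (gc.l_u_le _)).trans (hFt _ _)
end

section
/- Let X, Y be sets with f : X → Y surjective, and let L, M be complete lattices each equipped with a binary operation ⊗ that is monotone in each argument. Let φ : M → L be a map with φ(⊤) = ⊤, φ(⊥) = ⊥ and φ(a ⊗ b) = φ a ⊗ φ b for all a, b ∈ M, and let ψ : L → M be a left Galois adjoint of φ (ψ l ≤ m ⇔ l ≤ φ m) satisfying ψ(⊤) = ⊤ and ψ(a ⊗ b) = ψ a ⊗ ψ b for all a, b ∈ L. Define f_L^→ : (X → L) → (Y → L) by f_L^→(a)(y) = ⋁_{f(x) = y} a(x), and assume f_L^→(h ⊗ k) = f_L^→(h) ⊗ f_L^→(k) for all h, k : X → L. If F'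 is a fuzzy filter on (Y, M), then the map F : (X → L) → L defined by F(h) = φ(F'(ψ ∘ f_L^→(h))) is a fuzzy filter on (X, L). -/
/-- The forward powerset operator `f_L^→(a)(y) = ⋁_{f x = y} a x`. -/
def fwdPow {X Y L : Type*} [CompleteLattice L] (f : X → Y) (a : X → L) : Y → L :=
  fun y => ⨆ x ∈ f ⁻¹' {y}, a x

theorem stmt_8 {X Y L M : Type*} [CompleteLattice L] [CompleteLattice M]
    (tL : L → L → L) (tM : M → M → M) (htL : TensMono tL) (htM : TensMono tM)
    (f : X → Y) (hf : Function.Surjective f)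
    (φ : M → L) (hφTop : φ ⊤ = ⊤) (hφBot : φ ⊥ = ⊥)
    (hφTens : ∀ a b : M, φ (tM a b) = tL (φ a) (φ b))
    (ψ : L → M)
    (adj : ∀ (l : L) (m : M), ψ l ≤ m ↔ l ≤ φ m)
    (hψTop : ψ ⊤ = ⊤)
    (hψTens : ∀ a b : L, ψ (tL a b) = tM (ψ a) (ψ b))
    (hfwd : ∀ h k : X → L,
      fwdPow f (fun x => tL (h x) (k x)) = fun y => tL (fwdPow f h y) (fwdPow f k y))
    (F' : (Y → M) → M) (hF' : IsFuzzyFilter tM F') :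
    IsFuzzyFilter tL (fun h : X → L => φ (F' (ψ ∘ fwdPow f h))) := by
  have gc : GaloisConnection ψ φ := adj
  obtain ⟨hTop, hBot, hMono, hTens⟩ := hF'
  refine ⟨?_, ?_, ?_, ?_⟩
  -- Surjectivity makes every fibre nonempty, so the supremum of `⊤` over it is `⊤`.
  · have h : ψ ∘ fwdPow f (fun _ => (⊤ : L)) = fun _ => (⊤ : M) := by
      funext y
      obtain ⟨x, rfl⟩ := hf y
      have hx : fwdPow f (fun _ => (⊤ : L)) (f x) = ⊤ :=
        top_le_iff.mp (le_iSup₂_of_le x rfl le_rfl)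
      simp only [Function.comp_apply, hx, hψTop]
    simp only [h, hTop, hφTop]
  · have h : ψ ∘ fwdPow f (fun _ => (⊥ : L)) = fun _ => (⊥ : M) := by
      funext y
      simp [fwdPow, gc.l_bot]
    simp only [h, hBot, hφBot]
  · intro h k hk
    exact gc.monotone_u (hMono _ _ fun y => gc.monotone_l (iSup₂_mono fun x _ => hk x))
  · intro h k
    have e : ψ ∘ fwdPow f (fun x => tL (h x) (k x)) =
        fun y => tM ((ψ ∘ fwdPow f h) y) ((ψ ∘ fwdPow f k) y) := by
      funext y
      simp only [Function.comp_apply, hfwd, hψTens]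
    simp only [e, ← hφTens]
    exact gc.monotone_u (hTens _ _)
end

section
/- Let X, Y be sets, L an integral commutative quantale (a commutative quantale in which ⊤ is the multiplicative unit: ⊤ ⊗ a = a for all a ∈ L), and φ : X → Y a map. If U is a fuzzy ultrafilter on (X, L), then the map φ_U^→ : (Y → L) → L defined by φ_U^→(g) = U(g ∘ φ) is a fuzzy ultrafilter on (Y, L). -/
/-!
The image `g ↦ U (g ∘ φ)` is clearly a fuzzy filter. For maximality, let `G` be a fuzzy filter on
`Y` above it, and consider the join of `U` with the pullback of `G` along `φ`,
`H f = ⋁ {G g ⊗ U h | (g ∘ φ) ⊗ h ≤ f}` (`joinPullback`). The only delicate filter axiom for `H` is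
`H 0 = ⊥`: if `(g ∘ φ) ⊗ h ≤ 0`, then `h ≤ (g ⊸ 0) ∘ φ` by residuation, so
`U h ≤ U ((g ⊸ 0) ∘ φ) ≤ G (g ⊸ 0)`, and
`G g ⊗ U h ≤ G g ⊗ G (g ⊸ 0) ≤ G (g ⊗ (g ⊸ 0)) ≤ G 0 = ⊥`.
Since `H` lies above `U`, maximality gives `H = U`, whence `G g ≤ H (g ∘ φ) = U (g ∘ φ)`.
-/

/-- `L` with `t = ⊗` is a commutative quantale: `⊗` is commutative, associative, and
distributes over arbitrary suprema in each argument. -/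
def IsCommQuantale {L : Type*} [CompleteLattice L] (t : L → L → L) : Prop :=
  (∀ a b : L, t a b = t b a) ∧
  (∀ a b c : L, t (t a b) c = t a (t b c)) ∧
  (∀ (a : L) (s : Set L), t a (sSup s) = ⨆ b ∈ s, t a b)

namespace IsCommQuantale

variable {L : Type*} [CompleteLattice L] {t : L → L → L}

theorem mono_right (hq : IsCommQuantale t) (a : L) {b c : L} (h : b ≤ c) : t a b ≤ t a c := by
  have h1 := hq.2.2 a {b, c}
  rw [sSup_pair, sup_eq_right.mpr h] at h1
  rw [h1]
  exact le_iSup₂_of_le b (by simp) le_rfl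

theorem mono (hq : IsCommQuantale t) {a b c d : L} (h : a ≤ b) (h' : c ≤ d) :
    t a c ≤ t b d := by
  refine (hq.mono_right a h').trans ?_
  rw [hq.1 a d, hq.1 b d]
  exact hq.mono_right d h

theorem mul_mul_mul_comm (hq : IsCommQuantale t) (a b c d : L) :
    t (t a b) (t c d) = t (t a c) (t b d) := by
  rw [hq.2.1, ← hq.2.1 b c d, hq.1 b c, hq.2.1 c b d, ← hq.2.1]

theorem sSup_mul_sSup_le (hq : IsCommQuantale t) {A B : Set L} {d : L}
    (h : ∀ a ∈ A, ∀ b ∈ B, t a b ≤ d) : t (sSup A) (sSup B) ≤ d := by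
  rw [hq.2.2]
  refine iSup₂_le fun b hb => ?_
  rw [hq.1, hq.2.2]
  refine iSup₂_le fun a ha => ?_
  rw [hq.1]
  exact h a ha b hb

end IsCommQuantale

/-- The join of `U` with the pullback along `φ` of `G`:
`f ↦ ⋁ {G g ⊗ U h | (g ∘ φ) ⊗ h ≤ f}`. -/
def joinPullback {X Y L : Type*} [CompleteLattice L] (t : L → L → L) (φ : X → Y)
    (U : (X → L) → L) (G : (Y → L) → L) (f : X → L) : L :=
  sSup {c | ∃ (g : Y → L) (h : X → L), (∀ x, t (g (φ x)) (h x) ≤ f x) ∧ c = t (G g) (U h)}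

/-- Residuation: two fuzzy sets `g ∘ φ` and `h` with `(g ∘ φ) ⊗ h = 0` have `G g ⊗ U h = ⊥`, so `G`
and `U` are compatible. -/
theorem mul_le_bot_of_disjoint {X Y L : Type*} [CompleteLattice L] {t : L → L → L}
    (hq : IsCommQuantale t) {φ : X → Y} {U : (X → L) → L} (hU : IsFuzzyFilter t U)
    {G : (Y → L) → L} (hG : IsFuzzyFilter t G) (hUG : ∀ g : Y → L, U (g ∘ φ) ≤ G g)
    {g : Y → L} {h : X → L} (hgh : ∀ x, t (g (φ x)) (h x) ≤ ⊥) : t (G g) (U h) ≤ ⊥ := by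
  -- `r` is the pointwise residual `g ⊸ 0`.
  let r : Y → L := fun y => sSup {c | t (g y) c ≤ ⊥}
  have hr : ∀ y, t (g y) (r y) ≤ ⊥ := fun y => by
    rw [hq.2.2]
    exact iSup₂_le fun c hc => hc
  have h1 : U h ≤ G r :=
    (hU.2.2.1 h (r ∘ φ) fun x => le_sSup (hgh x)).trans (hUG r)
  calc t (G g) (U h) ≤ t (G g) (G r) := hq.mono_right _ h1
    _ ≤ G (fun y => t (g y) (r y)) := hG.2.2.2 g r
    _ ≤ G (fun _ => ⊥) := hG.2.2.1 _ _ hr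
    _ ≤ ⊥ := hG.2.1.le

theorem isFuzzyFilter_joinPullback {X Y L : Type*} [CompleteLattice L] {t : L → L → L}
    (hq : IsCommQuantale t) (hint : ∀ a : L, t ⊤ a = a)
    {φ : X → Y} {U : (X → L) → L} (hU : IsFuzzyFilter t U)
    {G : (Y → L) → L} (hG : IsFuzzyFilter t G) (hUG : ∀ g : Y → L, U (g ∘ φ) ≤ G g) :
    IsFuzzyFilter t (joinPullback t φ U G) := by
  refine ⟨?_, ?_, ?_, ?_⟩
  · refine top_le_iff.mp (le_sSup ⟨fun _ => ⊤, fun _ => ⊤, fun _ => le_top, ?_⟩)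
    rw [hG.1, hU.1, hint]
  · refine le_bot_iff.mp (sSup_le ?_)
    rintro _ ⟨g, h, hgh, rfl⟩
    exact mul_le_bot_of_disjoint hq hU hG hUG hgh
  · intro f f' hf
    refine sSup_le_sSup ?_
    rintro _ ⟨g, h, hgh, rfl⟩
    exact ⟨g, h, fun x => (hgh x).trans (hf x), rfl⟩
  · intro f f'
    refine hq.sSup_mul_sSup_le ?_
    rintro _ ⟨g, h, hgh, rfl⟩ _ ⟨g', h', hgh', rfl⟩
    rw [hq.mul_mul_mul_comm]
    refine (hq.mono (hG.2.2.2 g g') (hU.2.2.2 h h')).trans (le_sSup ⟨_, _, fun x => ?_, rfl⟩)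
    rw [hq.mul_mul_mul_comm]
    exact hq.mono (hgh x) (hgh' x)

theorem stmt_14 {X Y L : Type*} [CompleteLattice L]
    (t : L → L → L) (hq : IsCommQuantale t) (hint : ∀ a : L, t ⊤ a = a)
    (φ : X → Y) (U : (X → L) → L) (hU : IsFuzzyFilter t U)
    (hmax : ∀ G : (X → L) → L, IsFuzzyFilter t G → (∀ f : X → L, U f ≤ G f) → G = U) :
    IsFuzzyFilter t (fun g : Y → L => U (g ∘ φ)) ∧
      ∀ G : (Y → L) → L, IsFuzzyFilter t G →
        (∀ g : Y → L, U (g ∘ φ) ≤ G g) → G = fun g : Y → L => U (g ∘ φ) := by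
  refine ⟨⟨hU.1, hU.2.1, fun f g h => hU.2.2.1 _ _ fun x => h (φ x),
    fun f g => hU.2.2.2 (f ∘ φ) (g ∘ φ)⟩, fun G hG hUG => ?_⟩
  have hH : joinPullback t φ U G = U := by
    refine hmax _ (isFuzzyFilter_joinPullback hq hint hU hG hUG) fun f => ?_
    refine le_sSup ⟨fun _ => ⊤, f, fun x => (hint _).le, ?_⟩
    rw [hG.1, hint]
  funext g
  refine le_antisymm ?_ (hUG g)
  rw [← hH]
  refine le_sSup ⟨g, fun _ => ⊤, fun x => ?_, ?_⟩
  · rw [hq.1, hint]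
    rfl
  · rw [hU.1, hq.1, hint]
end

section
/- Let X be a set and L a commutative quantale. If F is a fuzzy filter on (X, L), then the map Υ_F : (X → L) → L defined by Υ_F(g) = F(g) if g ≠ 0_X and Υ_F(0_X) = ⊤ is a fuzzy topology on (X, L). -/
-- The fuzzy topology induced by a fuzzy filter: `Υ_F(g) = F g` for `g ≠ 0_X`,
-- and `Υ_F(0_X) = ⊤`.
open Classical in
noncomputable def indTop {X L : Type*} [CompleteLattice L] (F : (X → L) → L) :
    (X → L) → L :=
  fun g => if g = (fun _ => (⊥ : L)) then ⊤ else F g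

/-- A fuzzy topology on `(X, L)`: arbitrary joins (over any, possibly empty, family),
binary `⊗`, and the top element. -/
def IsFuzzyTopology {X L : Type*} [CompleteLattice L] (t : L → L → L)
    (T : (X → L) → L) : Prop :=
  (∀ s : Set (X → L), (⨅ g ∈ s, T g) ≤ T (sSup s)) ∧
  (∀ f g : X → L, t (T f) (T g) ≤ T (fun x => t (f x) (g x))) ∧
  T (fun _ => (⊤ : L)) = ⊤

theorem IsCommQuantale.mul_bot {L : Type*} [CompleteLattice L] {t : L → L → L}
    (hq : IsCommQuantale t) (a : L) : t a ⊥ = ⊥ := by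
  simpa using hq.2.2 a ∅

theorem stmt_15 {X L : Type*} [CompleteLattice L]
    (t : L → L → L) (hq : IsCommQuantale t)
    (F : (X → L) → L) (hF : IsFuzzyFilter t F) :
    IsFuzzyTopology t (indTop F) := by
  obtain ⟨hTop, -, hMono, hMul⟩ := hF
  refine ⟨fun s => ?_, fun f g => ?_, ?_⟩
  · by_cases hs : sSup s = fun _ => (⊥ : L)
    · simp [indTop, hs]
    · obtain ⟨g, hg, hne⟩ : ∃ g ∈ s, g ≠ fun _ => (⊥ : L) := by
        by_contra! h
        exact hs (sSup_eq_bot.2 h)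
      refine (iInf₂_le g hg).trans ?_
      simpa only [indTop, if_neg hs, if_neg hne] using hMono _ _ (le_sSup hg)
  · by_cases hfg : (fun x => t (f x) (g x)) = fun _ => (⊥ : L)
    · simp [indTop, hfg]
    · have hf : f ≠ fun _ => (⊥ : L) := by
        rintro rfl
        exact hfg (funext fun x => (hq.1 _ _).trans (hq.mul_bot _))
      have hg : g ≠ fun _ => (⊥ : L) := by
        rintro rfl
        exact hfg (funext fun x => hq.mul_bot _)
      simpa only [indTop, if_neg hfg, if_neg hf, if_neg hg] using hMul f g
  -- If `X` is empty or `L` is trivial, then `1_X = 0_X`; the value is `⊤` in either case.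
  · simp only [indTop, hTop, ite_self]
end

section
/- Let X, Y be sets, L, M complete lattices each equipped with a binary operation ⊗ that is monotone in each argument, f : X → Y a map, and φ : M → L a map having a right Galois adjoint φ* : L → M (φ m ≤ l ⇔ m ≤ φ* l), satisfying φ(⊤) = ⊤ and φ(a ⊗ b) = φ a ⊗ φ b for all a, b ∈ M. If Υ is a fuzzy topology on (X, L), then Υ_{(f,φ)} := φ* ∘ Υ ∘ (f, φ)^← is a fuzzy topology on (Y, M). -/
theorem stmt_17 {X Y L M : Type*} [CompleteLattice L] [CompleteLattice M]
    (tL : L → L → L) (tM : M → M → M) (htL : TensMono tL) (htM : TensMono tM)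
    (f : X → Y) (φ : M → L) (φs : L → M)
    (adj : ∀ (m : M) (l : L), φ m ≤ l ↔ m ≤ φs l)
    (hTop : φ ⊤ = ⊤)
    (hTens : ∀ a b : M, φ (tM a b) = tL (φ a) (φ b))
    (T : (X → L) → L) (hT : IsFuzzyTopology tL T) :
    IsFuzzyTopology tM (fun b : Y → M => φs (T (backPow f φ b))) := by
  obtain ⟨hSup, hMul, hOne⟩ := hT
  have gc : GaloisConnection φ φs := adj
  refine ⟨fun s => ?_, fun a b => ?_, ?_⟩
  · have key : backPow f φ (sSup s) = sSup (Set.image (backPow f φ) s) := by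
      funext x
      rw [sSup_image, sSup_eq_iSup]
      simp only [backPow, Function.comp_apply, iSup_apply, gc.l_iSup]
    have h := hSup (Set.image (backPow f φ) s)
    rw [iInf_image, ← key] at h
    simpa only [gc.u_iInf] using gc.monotone_u h
  · have key : backPow f φ (fun y => tM (a y) (b y)) =
        fun x => tL (backPow f φ a x) (backPow f φ b x) :=
      funext fun x => hTens _ _
    refine (adj _ _).1 ?_
    rw [hTens, key]
    exact (htL _ _ _ _ (gc.l_u_le _) (gc.l_u_le _)).trans (hMul _ _)
  · have key : backPow f φ (fun _ : Y => (⊤ : M)) = fun _ => ⊤ := funext fun _ => hTop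
    simp only [key, hOne, gc.u_top]
end
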